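/- One has (4/π²) · I_A(T) ≤ T · ∑ |α_m α_n|, where the sum runs over pairs m, n ≤ N with |log(m/n)| ≤ 2π/T. -/

import Mathlib

/-!
The argument majorises the indicator function of `[0, T]` by a function whose Fourier transform
has compact support. The triangle function `Λ(x) = max(0, 1 - |x|)` has Fourier transform
`sinc(πv)²` (`fourier_tri`), which is integrable, so Fourier inversion gives
`∫ e^{2πivx} sinc(πv)² dv = Λ(x)` (`integral_sinc_sq`). Jordan's inequality gives
`sinc(πv)² ≥ 4/π²` for `|v| ≤ 1/2` (`sinc_sq_lower`). Hence, for an exponential sum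
`F(v) = ∑ c_n e^{2πi v x_n}`, the quantity `(4/π²) ∫_{-1/2}^{1/2} |F|²` is at most
`∫_ℝ sinc(πv)² |F(v)|² dv = ∑_{m,n} c_m c̄_n Λ(x_m - x_n)`, where only the pairs with
`|x_m - x_n| < 1` contribute, each with weight at most `1` (`exp_sum_bound`).

The substitution `t = T v + T/2` turns `A(it)` into such an `F`, with
`x_n = -T log n / (2π)` and `|c_n| = |α_n|`.
-/

open scoped Classical

open scoped FourierTransform
open MeasureTheory

/-- The triangle function `Λ(x) = max(0, 1 - |x|)`. -/
noncomputable def tri (x : ℝ) : ℝ := max 0 (1 - |x|)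

lemma tri_continuous : Continuous tri := by unfold tri; fun_prop

lemma tri_support : Function.support tri ⊆ Set.Ioc (-1) 1 := by
  intro x hx
  by_contra h
  apply hx
  have : 1 ≤ |x| := by
    by_contra h'
    push Not at h'
    rw [abs_lt] at h'
    exact h ⟨h'.1, h'.2.le⟩
  simp only [tri]
  exact max_eq_left (by linarith)

lemma tri_integrable : Integrable (fun x => (tri x : ℂ)) := by
  have hc : Continuous (fun x => (tri x : ℂ)) := Complex.continuous_ofReal.comp tri_continuous
  apply hc.integrable_of_hasCompactSupport
  refine HasCompactSupport.intro (isCompact_Icc (a := (-1:ℝ)) (b := 1)) fun x hx => ?_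
  have : tri x = 0 := by
    by_contra h
    exact hx (Set.Ioc_subset_Icc_self (tri_support h))
  simp [this]

/-- The Fourier transform of the triangle function is `sinc(πv)²`. Only `v ≠ 0` is treated, where
the explicit primitive of `e^{cx} (1 ± x)`, `c = -2πiv`, makes sense; inversion needs the formula
almost everywhere only. -/
lemma fourier_tri {v : ℝ} (hv : v ≠ 0) :
    𝓕 (fun x => (tri x : ℂ)) v = ((Real.sinc (Real.pi * v) ^ 2 : ℝ) : ℂ) := by
  have hpi : (Real.pi : ℂ) ≠ 0 := by exact_mod_cast Real.pi_ne_zero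
  have hv' : (v : ℂ) ≠ 0 := by exact_mod_cast hv
  set c : ℂ := -2 * Real.pi * v * Complex.I with hcdef
  have hc : c ≠ 0 := by simp [hcdef, hpi, hv', Complex.I_ne_zero]
  have hexp : ∀ x : ℝ, HasDerivAt (fun y : ℝ => Complex.exp (c * y)) (Complex.exp (c * x) * c) x := by
    intro x
    simpa using ((Complex.ofRealCLM.hasDerivAt (x := x)).const_mul c).cexp
  have hid : ∀ x : ℝ, HasDerivAt (fun y : ℝ => (y : ℂ)) 1 x :=
    fun x => Complex.ofRealCLM.hasDerivAt (x := x)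
  rw [Real.fourier_real_eq_integral_exp_smul]
  have h1 : ∫ x : ℝ, Complex.exp (↑(-2 * Real.pi * x * v) * Complex.I) • (tri x : ℂ)
      = ∫ x in (-1:ℝ)..1, Complex.exp (c * x) * (tri x : ℂ) := by
    rw [← intervalIntegral.integral_eq_integral_of_support_subset
      (f := fun x : ℝ => Complex.exp (↑(-2 * Real.pi * x * v) * Complex.I) • (tri x : ℂ))]
    · refine intervalIntegral.integral_congr fun x _ => ?_
      simp only [smul_eq_mul, hcdef]
      congr 2
      push_cast; ring
    · intro x hx
      apply tri_support
      intro h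
      apply hx
      simp [h]
  have hcont : Continuous (fun x : ℝ => Complex.exp (c * x) * (tri x : ℂ)) := by
    have := tri_continuous
    fun_prop
  have hL : ∫ x in (-1:ℝ)..0, Complex.exp (c * x) * (tri x : ℂ)
      = 1 / c - 1 / c ^ 2 + Complex.exp (-c) / c ^ 2 := by
    have : ∫ x in (-1:ℝ)..0, Complex.exp (c * x) * (tri x : ℂ)
      = ∫ x in (-1:ℝ)..0, Complex.exp (c * x) * (1 + (x : ℂ)) := by
      refine intervalIntegral.integral_congr fun x hx => ?_
      rw [Set.uIcc_of_le (by norm_num)] at hx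
      have : tri x = 1 + x := by
        rw [tri, abs_of_nonpos hx.2, max_eq_right (by linarith [hx.1])]; ring
      simp [this]
    rw [this, intervalIntegral.integral_eq_sub_of_hasDerivAt
      (f := fun x : ℝ => Complex.exp (c * x) * (1 + (x : ℂ)) / c - Complex.exp (c * x) / c ^ 2)]
    · simp
    · intro x _
      refine ((((hexp x).mul ((hid x).const_add 1)).div_const c).sub
        ((hexp x).div_const (c ^ 2))).congr_deriv ?_
      field_simp; ring
    · exact (by fun_prop : Continuous _).intervalIntegrable _ _
  have hR : ∫ x in (0:ℝ)..1, Complex.exp (c * x) * (tri x : ℂ)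
      = - 1 / c - 1 / c ^ 2 + Complex.exp c / c ^ 2 := by
    have : ∫ x in (0:ℝ)..1, Complex.exp (c * x) * (tri x : ℂ)
      = ∫ x in (0:ℝ)..1, Complex.exp (c * x) * (1 - (x : ℂ)) := by
      refine intervalIntegral.integral_congr fun x hx => ?_
      rw [Set.uIcc_of_le (by norm_num)] at hx
      have : tri x = 1 - x := by
        rw [tri, abs_of_nonneg hx.1, max_eq_right (by linarith [hx.2])]
      simp [this]
    rw [this, intervalIntegral.integral_eq_sub_of_hasDerivAt
      (f := fun x : ℝ => Complex.exp (c * x) * (1 - (x : ℂ)) / c + Complex.exp (c * x) / c ^ 2)]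
    · simp; ring
    · intro x _
      refine ((((hexp x).mul ((hid x).const_sub 1)).div_const c).add
        ((hexp x).div_const (c ^ 2))).congr_deriv ?_
      field_simp; ring
    · exact (by fun_prop : Continuous _).intervalIntegrable _ _
  rw [h1, ← intervalIntegral.integral_add_adjacent_intervals
    (hcont.intervalIntegrable (-1) 0) (hcont.intervalIntegrable 0 1), hL, hR,
    Real.sinc_of_ne_zero (by positivity)]
  have hsin : Complex.exp (-c) + Complex.exp c = 2 - 4 * Complex.sin (Real.pi * v) ^ 2 := by
    have h2 : Complex.cos (2 * (Real.pi * v)) = 1 - 2 * Complex.sin (Real.pi * v) ^ 2 := by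
      rw [Complex.cos_two_mul, Complex.cos_sq']; ring
    have h3 := Complex.two_cos (2 * (Real.pi * v))
    rw [h2] at h3
    rw [show -c = 2 * (Real.pi * v) * Complex.I by rw [hcdef]; ring,
      show c = -(2 * (Real.pi * v)) * Complex.I by rw [hcdef]; ring, ← h3]
    ring
  have hc2 : c ^ 2 = -4 * (Real.pi * v) ^ 2 := by
    rw [hcdef]
    linear_combination (4 * (Real.pi:ℂ) ^ 2 * v ^ 2) * Complex.I_sq
  calc _ = ((Complex.exp (-c) + Complex.exp c) - 2) / c ^ 2 := by ring
    _ = _ := by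
      rw [hsin, hc2]; push_cast; field_simp; ring

/-- Integrability follows from `sinc(πv)² ≤ min(1, 1/(πv)²) ≤ 2/(1 + v²)`. -/
lemma sinc_sq_integrable : Integrable (fun v : ℝ => Real.sinc (Real.pi * v) ^ 2) := by
  refine (integrable_inv_one_add_sq.const_mul 2).mono'
    (by have := Real.continuous_sinc; fun_prop) (Filter.Eventually.of_forall fun v => ?_)
  rw [Real.norm_of_nonneg (sq_nonneg _), ← div_eq_mul_inv, le_div_iff₀ (by positivity)]
  have h1 : Real.sinc (Real.pi * v) ^ 2 ≤ 1 := by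
    rw [sq_le_one_iff_abs_le_one, abs_le]
    exact ⟨Real.neg_one_le_sinc _, Real.sinc_le_one _⟩
  have h2 : Real.sinc (Real.pi * v) ^ 2 * v ^ 2 ≤ 1 := by
    by_cases hv : v = 0
    · simp [hv]
    rw [Real.sinc_of_ne_zero (by positivity)]
    have : (Real.sin (Real.pi * v) / (Real.pi * v)) ^ 2 * v ^ 2
        = Real.sin (Real.pi * v) ^ 2 / Real.pi ^ 2 := by field_simp
    rw [this, div_le_one (by positivity)]
    nlinarith [Real.sin_sq_le_one (Real.pi * v), Real.pi_gt_three]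
  linarith

lemma fourier_tri_ae :
    𝓕 (fun x => (tri x : ℂ)) =ᵐ[volume] fun v => ((Real.sinc (Real.pi * v) ^ 2 : ℝ) : ℂ) := by
  have : ∀ᵐ v : ℝ, v ≠ 0 := by simp [ae_iff]
  filter_upwards [this] with v hv using fourier_tri hv

/-- Fourier inversion for the triangle function. -/
lemma integral_sinc_sq (x : ℝ) :
    ∫ v : ℝ, Complex.exp (2 * Real.pi * v * x * Complex.I) * ((Real.sinc (Real.pi * v) ^ 2 : ℝ) : ℂ)
      = tri x := by
  have hint : Integrable (𝓕 (fun x => (tri x : ℂ))) :=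
    (sinc_sq_integrable.ofReal (𝕜 := ℂ)).congr fourier_tri_ae.symm
  have h := tri_integrable.fourierInv_fourier_eq hint (v := x)
    (Complex.continuous_ofReal.comp tri_continuous).continuousAt
  rw [← h, Real.fourierInv_eq']
  refine integral_congr_ae ?_
  filter_upwards [fourier_tri_ae] with v hv
  rw [hv, smul_eq_mul]
  congr 2
  simp
  ring

/-- Jordan's inequality `sin y ≥ 2y/π` on `[0, π/2]`, in terms of `sinc`. -/
lemma sinc_sq_lower {v : ℝ} (hv : |v| ≤ 1 / 2) :
    4 / Real.pi ^ 2 ≤ Real.sinc (Real.pi * v) ^ 2 := by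
  have key : ∀ w : ℝ, 0 ≤ w → w ≤ 1 / 2 → 2 / Real.pi ≤ Real.sinc (Real.pi * w) := by
    intro w h0 h1
    rcases h0.eq_or_lt with rfl | h0
    · simp [div_le_one Real.pi_pos, Real.two_le_pi]
    rw [Real.sinc_of_ne_zero (by positivity), le_div_iff₀ (by positivity)]
    exact Real.mul_le_sin (by positivity) (by nlinarith [Real.pi_pos])
  have h : Real.sinc (Real.pi * v) = Real.sinc (Real.pi * |v|) := by
    rcases abs_choice v with h | h <;> rw [h]
    rw [mul_neg, Real.sinc_neg]
  rw [h, show (4 : ℝ) / Real.pi ^ 2 = (2 / Real.pi) ^ 2 by ring]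
  exact pow_le_pow_left₀ (by positivity) (key _ (abs_nonneg _) hv) 2

/-- The mean value bound for a general exponential sum over an interval of length one. Expanding
`sinc(πv)² |F(v)|²` and integrating termwise evaluates every term by
`integral_sinc_sq`. -/
lemma exp_sum_bound (s : Finset ℕ) (c : ℕ → ℂ) (x : ℕ → ℝ) :
    4 / Real.pi ^ 2 * ∫ v in (-1 / 2 : ℝ)..(1 / 2),
      ‖∑ n ∈ s, c n * Complex.exp (2 * Real.pi * v * x n * Complex.I)‖ ^ 2
      ≤ ∑ m ∈ s, ∑ n ∈ s, ‖c m‖ * ‖c n‖ * tri (x m - x n) := by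
  set F : ℝ → ℂ := fun v => ∑ n ∈ s, c n * Complex.exp (2 * Real.pi * v * x n * Complex.I) with hF
  have hFc : Continuous F := by fun_prop
  have hterm : ∀ m n, Integrable (fun v : ℝ => c m * starRingEnd ℂ (c n) *
      (Complex.exp (2 * Real.pi * v * ((x m - x n : ℝ) : ℂ) * Complex.I) *
        ((Real.sinc (Real.pi * v) ^ 2 : ℝ) : ℂ))) := by
    intro m n
    refine Integrable.const_mul ?_ _
    refine (sinc_sq_integrable.ofReal (𝕜 := ℂ)).bdd_mul (c := 1)
      (by fun_prop) (Filter.Eventually.of_forall fun v => ?_)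
    rw [show (2 * Real.pi * v * ((x m - x n : ℝ) : ℂ) * Complex.I)
      = ((2 * Real.pi * v * (x m - x n) : ℝ) : ℂ) * Complex.I by push_cast; ring,
      Complex.norm_exp_ofReal_mul_I]
  have hexpand : ∀ v : ℝ, ((Real.sinc (Real.pi * v) ^ 2 * ‖F v‖ ^ 2 : ℝ) : ℂ) =
      ∑ m ∈ s, ∑ n ∈ s, c m * starRingEnd ℂ (c n) *
      (Complex.exp (2 * Real.pi * v * ((x m - x n : ℝ) : ℂ) * Complex.I) *
        ((Real.sinc (Real.pi * v) ^ 2 : ℝ) : ℂ)) := by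
    intro v
    rw [Complex.ofReal_mul, Complex.ofReal_pow ‖F v‖, ← Complex.mul_conj', hF]
    simp only [map_sum]
    rw [Finset.sum_mul_sum, Finset.mul_sum]
    simp only [Finset.mul_sum]
    refine Finset.sum_congr rfl fun m _ => Finset.sum_congr rfl fun n _ => ?_
    rw [show (2 * Real.pi * v * ((x m - x n : ℝ) : ℂ) * Complex.I)
      = 2 * Real.pi * v * x m * Complex.I + -(2 * Real.pi * v * x n * Complex.I) by
        push_cast; ring, Complex.exp_add]
    simp only [map_mul, ← Complex.exp_conj, Complex.conj_ofReal, Complex.conj_I, map_ofNat,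
      mul_neg]
    ring
  have hintC : Integrable (fun v : ℝ => ((Real.sinc (Real.pi * v) ^ 2 * ‖F v‖ ^ 2 : ℝ) : ℂ)) := by
    simp_rw [hexpand]
    exact integrable_finsetSum _ fun m _ => integrable_finsetSum _ fun n _ => hterm m n
  have hint : Integrable (fun v : ℝ => Real.sinc (Real.pi * v) ^ 2 * ‖F v‖ ^ 2) := by
    have h := hintC.re
    simp only [RCLike.re_to_complex, Complex.ofReal_re] at h
    exact h
  have hval : ((∫ v : ℝ, Real.sinc (Real.pi * v) ^ 2 * ‖F v‖ ^ 2 : ℝ) : ℂ) =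
      ∑ m ∈ s, ∑ n ∈ s, c m * starRingEnd ℂ (c n) * tri (x m - x n) := by
    rw [← integral_complex_ofReal]
    simp_rw [hexpand]
    rw [integral_finsetSum _ fun m _ => integrable_finsetSum _ fun n _ => hterm m n]
    refine Finset.sum_congr rfl fun m _ => ?_
    rw [integral_finsetSum _ fun n _ => hterm m n]
    refine Finset.sum_congr rfl fun n _ => ?_
    rw [integral_const_mul, integral_sinc_sq]
  have hle : 4 / Real.pi ^ 2 * ∫ v in (-1 / 2 : ℝ)..(1 / 2), ‖F v‖ ^ 2
      ≤ ∫ v : ℝ, Real.sinc (Real.pi * v) ^ 2 * ‖F v‖ ^ 2 := by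
    have hi : IntervalIntegrable (fun v => ‖F v‖ ^ 2) volume (-1 / 2) (1 / 2) :=
      (by fun_prop : Continuous fun v => ‖F v‖ ^ 2).intervalIntegrable _ _
    calc _ = ∫ v in (-1 / 2 : ℝ)..(1 / 2), 4 / Real.pi ^ 2 * ‖F v‖ ^ 2 := by
          rw [intervalIntegral.integral_const_mul]
      _ ≤ ∫ v in (-1 / 2 : ℝ)..(1 / 2), Real.sinc (Real.pi * v) ^ 2 * ‖F v‖ ^ 2 := by
          refine intervalIntegral.integral_mono_on (by norm_num) (hi.const_mul _)
            hint.intervalIntegrable fun v hv => ?_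
          gcongr
          exact sinc_sq_lower (abs_le.2 ⟨by linarith [hv.1], hv.2⟩)
      _ ≤ _ := by
          rw [intervalIntegral.integral_of_le (by norm_num)]
          exact setIntegral_le_integral hint
            (Filter.Eventually.of_forall fun v => by positivity)
  refine hle.trans ?_
  calc _ ≤ ‖((∫ v : ℝ, Real.sinc (Real.pi * v) ^ 2 * ‖F v‖ ^ 2 : ℝ) : ℂ)‖ := by
        rw [Complex.norm_real]; exact Real.le_norm_self _
    _ ≤ _ := by
        rw [hval]
        refine (norm_sum_le _ _).trans (Finset.sum_le_sum fun m _ =>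
          (norm_sum_le _ _).trans (Finset.sum_le_sum fun n _ => ?_))
        rw [norm_mul, norm_mul, RCLike.norm_conj, Complex.norm_real,
          Real.norm_of_nonneg (show 0 ≤ tri (x m - x n) from le_max_left _ _)]

theorem dirichlet_mean_value_upper (T : ℝ) (hT : 0 < T) (N : ℕ) (hN : 0 < N)
    (α : ℕ → ℝ) :
    (4 / Real.pi ^ 2) *
        (∫ t in (0 : ℝ)..T,
          ‖∑ n ∈ Finset.Icc 1 N, (α n : ℂ) * (n : ℂ) ^ (-(Complex.I * (t : ℂ)))‖ ^ 2) ≤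
      T * ∑ m ∈ Finset.Icc 1 N, ∑ n ∈ Finset.Icc 1 N,
        (if |Real.log ((m : ℝ) / (n : ℝ))| ≤ 2 * Real.pi / T
          then |α m * α n| else 0) := by
  set f : ℝ → ℝ := fun t =>
    ‖∑ n ∈ Finset.Icc 1 N, (α n : ℂ) * (n : ℂ) ^ (-(Complex.I * (t : ℂ)))‖ ^ 2 with hf
  -- Centring the interval `[0, T]` at `0` moves the factor `n^{-iT/2}` into the coefficients.
  set c : ℕ → ℂ := fun n => (α n : ℂ) * Complex.exp (-(T / 2 * Real.log n : ℝ) * Complex.I)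
  set x : ℕ → ℝ := fun n => -(T * Real.log n / (2 * Real.pi))
  have hpi : (Real.pi : ℂ) ≠ 0 := by exact_mod_cast Real.pi_ne_zero
  have hcn : ∀ n, ‖c n‖ = |α n| := by
    intro n
    simp only [c, norm_mul, Complex.norm_real, Real.norm_eq_abs, ← Complex.ofReal_neg,
      Complex.norm_exp_ofReal_mul_I, mul_one]
  have hsub : ∫ t in (0 : ℝ)..T, f t = T * ∫ v in (-1 / 2 : ℝ)..(1 / 2), f (T * v + T / 2) := by
    rw [intervalIntegral.integral_comp_mul_add _ hT.ne', smul_eq_mul, mul_inv_cancel_left₀ hT.ne']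
    congr 1 <;> ring
  have hfv : ∀ v : ℝ, f (T * v + T / 2) =
      ‖∑ n ∈ Finset.Icc 1 N, c n * Complex.exp (2 * Real.pi * v * x n * Complex.I)‖ ^ 2 := by
    intro v
    simp only [hf]
    congr 2
    refine Finset.sum_congr rfl fun n hn => ?_
    have hn0 : (n : ℂ) ≠ 0 := by
      have := (Finset.mem_Icc.1 hn).1
      exact_mod_cast (by omega : n ≠ 0)
    rw [Complex.cpow_def_of_ne_zero hn0, mul_assoc, ← Complex.exp_add, ← Complex.natCast_log]
    congr 2
    simp only [x]
    push_cast
    field_simp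
    ring
  rw [hsub, mul_left_comm]
  simp_rw [hfv]
  refine mul_le_mul_of_nonneg_left ((exp_sum_bound _ c x).trans ?_) hT.le
  refine Finset.sum_le_sum fun m hm => Finset.sum_le_sum fun n hn => ?_
  have hm0 : (m : ℝ) ≠ 0 := by
    have := (Finset.mem_Icc.1 hm).1
    exact_mod_cast (by omega : m ≠ 0)
  have hn0 : (n : ℝ) ≠ 0 := by
    have := (Finset.mem_Icc.1 hn).1
    exact_mod_cast (by omega : n ≠ 0)
  rw [hcn, hcn, ← abs_mul]
  have hx : |x m - x n| = |Real.log ((m : ℝ) / n)| / (2 * Real.pi / T) := by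
    have hneg : x m - x n = -(Real.log ((m : ℝ) / n) / (2 * Real.pi / T)) := by
      rw [Real.log_div hm0 hn0]
      simp only [x]
      field_simp
      ring
    rw [hneg, abs_neg, abs_div, abs_of_pos (show 0 < 2 * Real.pi / T by positivity)]
  split_ifs with h
  · exact mul_le_of_le_one_right (abs_nonneg _)
      (max_le zero_le_one (by linarith [abs_nonneg (x m - x n)]))
  · have : 1 ≤ |x m - x n| := by
      rw [hx, one_le_div (by positivity)]
      exact (not_le.1 h).le
    rw [tri, max_eq_left (by linarith), mul_zero]
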